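/- arXiv:math/0409468 — 7 statements merged into one kernel-verified Lean document; each statement's English description precedes it below -/
import Mathlib

section
/- Let M be a magic square of order 3. Then there exists a transformation g in the dihedral group of order 8 (generated by rotation by 90 degrees and reflection, acting on the entries of a 3×3 matrix) and nonnegative integers i, j, k such that g applied to M equals either T₁ + i·A + j·B + k·C or T₂ + i·A + j·B + k·D. -/
open Matrix Finset

/-- `IsMagic M m` : every row sum, column sum, and both diagonal sums of the
3×3 matrix `M` of nonnegative integers equal `m`, and all entries are distinct. -/
def IsMagic (M : Matrix (Fin 3) (Fin 3) ℕ) (m : ℕ) : Prop :=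
  (Function.Injective fun p : Fin 3 × Fin 3 => M p.1 p.2) ∧
  (∀ i, ∑ j, M i j = m) ∧
  (∀ j, ∑ i, M i j = m) ∧
  (∑ i, M i i = m) ∧
  (∑ i, M i i.rev = m)

/-- A magic square of order 3. -/
def IsMagicSquare (M : Matrix (Fin 3) (Fin 3) ℕ) : Prop := ∃ m, IsMagic M m

/-- Rotation by 90 degrees acting on 3×3 matrices. -/
def rot (M : Matrix (Fin 3) (Fin 3) ℕ) : Matrix (Fin 3) (Fin 3) ℕ :=
  Matrix.of fun i j => M j.rev i

/-- Reflection acting on 3×3 matrices. -/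
def reflect (M : Matrix (Fin 3) (Fin 3) ℕ) : Matrix (Fin 3) (Fin 3) ℕ :=
  Matrix.of fun i j => M i j.rev

/-- The dihedral group of order 8 generated by `rot` and `reflect`, as a set of
transformations of 3×3 matrices. -/
def Dih8 : Set (Matrix (Fin 3) (Fin 3) ℕ → Matrix (Fin 3) (Fin 3) ℕ) :=
  {g | ∃ n ≤ 3, g = rot^[n] ∨ g = rot^[n] ∘ reflect}

def A : Matrix (Fin 3) (Fin 3) ℕ := !![1,1,1; 1,1,1; 1,1,1]
def B : Matrix (Fin 3) (Fin 3) ℕ := !![5,0,4; 2,3,4; 2,6,1]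
def C : Matrix (Fin 3) (Fin 3) ℕ := !![2,0,1; 0,1,2; 1,2,0]
def D : Matrix (Fin 3) (Fin 3) ℕ := !![3,0,3; 2,2,2; 1,4,1]
def T1 : Matrix (Fin 3) (Fin 3) ℕ := !![7,0,5; 2,4,6; 3,8,1]
def T2 : Matrix (Fin 3) (Fin 3) ℕ := !![8,0,7; 4,5,6; 3,10,2]

/-!
By Lucas's parametrization, a magic square with center `e` is determined by the excesses `u`, `v` of
its two top corners over `e`. Opposite corners average to `e`, so a rotation makes `u` and `v`
nonnegative; the square is then `z • A + u • C + v • reflect C` with `z` its top middle entry, and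
reflection swaps `u` and `v`. Distinctness of the entries excludes exactly the lines `u = 0`,
`v = 0`, `u = v`, `u = 2 v` and `v = 2 u`, so up to a reflection `(u, v)` lies in one of the open
cones `u > 2 v > 0` and `2 v > u > v`. The lattice points of the first are
`(3, 1) + ℕ (2, 1) + ℕ (1, 0)`, those of the second `(3, 2) + ℕ (2, 1) + ℕ (1, 1)`, and these
generators are the coordinates of `T1`, `B`, `C` and of `T2`, `B`, `D`.
-/

/-- Lucas's parametrization of the order 3 magic squares whose top middle entry `z` is the smallest.
The top corners exceed the center `z + u + v` by `u` (left) and `v` (right). -/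
def lucasSquare (z u v : ℕ) : Matrix (Fin 3) (Fin 3) ℕ :=
  z • A + u • C + v • reflect C

lemma lucasSquare_eq_entries (z u v : ℕ) :
    lucasSquare z u v =
      !![z + 2 * u + v, z,                 z + u + 2 * v;
         z + 2 * v,     z + u + v,         z + 2 * u;
         z + u,         z + 2 * u + 2 * v, z + v] := by
  ext i j
  fin_cases i <;> fin_cases j <;> simp [lucasSquare, A, C, reflect, mul_comm]

lemma reflect_lucasSquare (z u v : ℕ) : reflect (lucasSquare z u v) = lucasSquare z v u := by
  calc reflect (lucasSquare z u v)
    _ = z • A + u • reflect C + v • C := by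
      ext i j
      fin_cases i <;> fin_cases j <;> rfl
    _ = lucasSquare z v u := add_right_comm _ _ _

lemma B_eq : B = 2 • C + reflect C := by decide

lemma D_eq : D = C + reflect C := by decide

lemma T1_eq : T1 = 3 • C + reflect C := by decide

lemma T2_eq : T2 = 3 • C + 2 • reflect C := by decide

lemma lucasSquare_eq_T1_add (z j k : ℕ) :
    lucasSquare z (2 * j + k + 3) (j + 1) = T1 + z • A + j • B + k • C := by
  rw [lucasSquare, T1_eq, B_eq]
  module

lemma lucasSquare_eq_T2_add (z j k : ℕ) :
    lucasSquare z (2 * j + k + 3) (j + k + 2) = T2 + z • A + j • B + k • D := by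
  rw [lucasSquare, T2_eq, B_eq, D_eq]
  module

lemma exists_lucasSquare_eq_T1_add_or_T2_add (z : ℕ) {u v : ℕ} (hv : 0 < v) (hvu : v < u)
    (hne : u ≠ 2 * v) :
    ∃ i j k : ℕ, lucasSquare z u v = T1 + i • A + j • B + k • C ∨
      lucasSquare z u v = T2 + i • A + j • B + k • D := by
  rcases lt_or_gt_of_ne hne with hlt | hgt
  · obtain ⟨j, k, rfl, rfl⟩ : ∃ j k, u = 2 * j + k + 3 ∧ v = j + k + 2 :=
      ⟨u - v - 1, 2 * v - u - 1, by omega, by omega⟩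
    exact ⟨z, j, k, Or.inr (lucasSquare_eq_T2_add z j k)⟩
  · obtain ⟨j, k, rfl, rfl⟩ : ∃ j k, u = 2 * j + k + 3 ∧ v = j + 1 :=
      ⟨v - 1, u - 2 * v - 1, by omega, by omega⟩
    exact ⟨z, j, k, Or.inl (lucasSquare_eq_T1_add z j k)⟩

lemma isPeriodicPt_rot (M : Matrix (Fin 3) (Fin 3) ℕ) : Function.IsPeriodicPt rot 4 M := by
  change rot^[4] M = M
  ext i j
  simp [rot]

lemma semiconj_reflect_rot : Function.Semiconj reflect rot rot^[3] := by
  intro M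
  ext i j
  simp [rot, reflect]

lemma rot_iterate_mem_Dih8 (n : ℕ) : rot^[n] ∈ Dih8 :=
  ⟨n % 4, by omega, Or.inl <| funext fun M => ((isPeriodicPt_rot M).iterate_mod_apply n).symm⟩

lemma reflect_comp_rot_iterate_mem_Dih8 (n : ℕ) : reflect ∘ rot^[n] ∈ Dih8 := by
  refine ⟨3 * n % 4, by omega, Or.inr <| funext fun M => ?_⟩
  calc reflect (rot^[n] M)
    _ = (rot^[3])^[n] (reflect M) := semiconj_reflect_rot.iterate_right n M
    _ = rot^[3 * n] (reflect M) := by rw [Function.iterate_mul]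
    _ = rot^[3 * n % 4] (reflect M) := ((isPeriodicPt_rot _).iterate_mod_apply _).symm

namespace IsMagic

variable {M : Matrix (Fin 3) (Fin 3) ℕ} {m : ℕ}

lemma row_sum (hM : IsMagic M m) (i : Fin 3) : M i 0 + M i 1 + M i 2 = m :=
  (Fin.sum_univ_three _).symm.trans (hM.2.1 i)

lemma col_sum (hM : IsMagic M m) (j : Fin 3) : M 0 j + M 1 j + M 2 j = m :=
  (Fin.sum_univ_three _).symm.trans (hM.2.2.1 j)

lemma diag_sum (hM : IsMagic M m) : M 0 0 + M 1 1 + M 2 2 = m :=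
  (Fin.sum_univ_three _).symm.trans hM.2.2.2.1

lemma antidiag_sum (hM : IsMagic M m) : M 0 2 + M 1 1 + M 2 0 = m :=
  (Fin.sum_univ_three _).symm.trans hM.2.2.2.2

protected lemma rot (hM : IsMagic M m) : IsMagic (rot M) m := by
  obtain ⟨hinj, hrow, hcol, hdiag, hanti⟩ := hM
  have sum_rev (f : Fin 3 → ℕ) : ∑ j : Fin 3, f j.rev = ∑ j, f j := Equiv.sum_comp Fin.revPerm f
  have turn_injective : Function.Injective fun p : Fin 3 × Fin 3 => (p.2.rev, p.1) := by decide
  exact ⟨hinj.comp turn_injective, fun i => (sum_rev fun j => M j i).trans (hcol i),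
    fun j => hrow j.rev, by simpa [rot] using (sum_rev fun i => M i i.rev).trans hanti,
    by simpa [rot] using hdiag⟩

lemma rot_iterate (hM : IsMagic M m) (n : ℕ) : IsMagic (rot^[n] M) m :=
  Function.Iterate.rec (IsMagic · m) hM (fun _ h => h.rot) n

lemma eq_three_mul_center (hM : IsMagic M m) : m = 3 * M 1 1 := by
  have hcol₀ := hM.col_sum 0
  have hcol₂ := hM.col_sum 2
  have hrow₁ := hM.row_sum 1
  have hdiag := hM.diag_sum
  have hanti := hM.antidiag_sum
  -- The middle row and the diagonals cover the two outer columns once and the center three times.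
  omega

lemma topLeft_add_bottomRight (hM : IsMagic M m) : M 0 0 + M 2 2 = 2 * M 1 1 := by
  have hdiag := hM.diag_sum
  have hm := hM.eq_three_mul_center
  omega

lemma topRight_add_bottomLeft (hM : IsMagic M m) : M 0 2 + M 2 0 = 2 * M 1 1 := by
  have hanti := hM.antidiag_sum
  have hm := hM.eq_three_mul_center
  omega

lemma exists_rot_iterate_bottom_corners_le_center (hM : IsMagic M m) :
    ∃ n, (rot^[n] M) 2 0 ≤ (rot^[n] M) 1 1 ∧ (rot^[n] M) 2 2 ≤ (rot^[n] M) 1 1 := by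
  have hdiag : M 0 0 ≤ M 1 1 ∨ M 2 2 ≤ M 1 1 := by
    have := hM.topLeft_add_bottomRight
    omega
  have hanti : M 0 2 ≤ M 1 1 ∨ M 2 0 ≤ M 1 1 := by
    have := hM.topRight_add_bottomLeft
    omega
  rcases hdiag with h₀₀ | h₂₂ <;> rcases hanti with h₀₂ | h₂₀
  · exact ⟨2, h₀₂, h₀₀⟩
  · exact ⟨3, h₀₀, h₂₀⟩
  · exact ⟨1, h₂₂, h₀₂⟩
  · exact ⟨0, h₂₀, h₂₂⟩

lemma eq_lucasSquare (hM : IsMagic M m) (hleft : M 2 0 ≤ M 1 1) (hright : M 2 2 ≤ M 1 1) :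
    M = lucasSquare (M 0 1) (M 1 1 - M 2 2) (M 1 1 - M 2 0) := by
  have hm := hM.eq_three_mul_center
  have hdiag := hM.diag_sum
  have hanti := hM.antidiag_sum
  have hrow₀ := hM.row_sum 0
  have hrow₂ := hM.row_sum 2
  have hcol₀ := hM.col_sum 0
  have hcol₂ := hM.col_sum 2
  rw [lucasSquare_eq_entries]
  ext i j
  fin_cases i <;> fin_cases j <;>
    simp only [Fin.zero_eta, Fin.mk_one, Fin.reduceFinMk, of_apply, cons_val', Matrix.cons_val,
      cons_val_fin_one] <;>
    omega

lemma exists_rot_iterate_eq_lucasSquare (hM : IsMagic M m) :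
    ∃ n z u v, rot^[n] M = lucasSquare z u v := by
  obtain ⟨n, hleft, hright⟩ := hM.exists_rot_iterate_bottom_corners_le_center
  exact ⟨n, _, _, _, (hM.rot_iterate n).eq_lucasSquare hleft hright⟩

lemma pos_and_ne_of_lucasSquare {z u v : ℕ} (h : IsMagic (lucasSquare z u v) m) :
    0 < u ∧ 0 < v ∧ u ≠ v ∧ u ≠ 2 * v ∧ v ≠ 2 * u := by
  rw [lucasSquare_eq_entries] at h
  have hu : z + u + 2 * v ≠ z + 2 * v := h.1.ne (a₁ := (0, 2)) (a₂ := (1, 0)) (by decide)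
  have hv : z + 2 * u + v ≠ z + 2 * u := h.1.ne (a₁ := (0, 0)) (a₂ := (1, 2)) (by decide)
  have huv : z + 2 * u + v ≠ z + u + 2 * v := h.1.ne (a₁ := (0, 0)) (a₂ := (0, 2)) (by decide)
  have hu2v : z + u + 2 * v ≠ z + 2 * u := h.1.ne (a₁ := (0, 2)) (a₂ := (1, 2)) (by decide)
  have hv2u : z + 2 * u + v ≠ z + 2 * v := h.1.ne (a₁ := (0, 0)) (a₂ := (1, 0)) (by decide)
  omega

end IsMagic

/-- Every magic square of order 3, after applying a suitable element of the
dihedral group of order 8, is of the form `T₁ + i·A + j·B + k·C` or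
`T₂ + i·A + j·B + k·D` with `i, j, k` nonnegative integers. -/
theorem every_magic_square_of_two_types (M : Matrix (Fin 3) (Fin 3) ℕ)
    (hM : IsMagicSquare M) :
    ∃ g ∈ Dih8, ∃ i j k : ℕ,
      g M = T1 + i • A + j • B + k • C ∨ g M = T2 + i • A + j • B + k • D := by
  obtain ⟨m, hM⟩ := hM
  obtain ⟨n, z, u, v, hrot⟩ := hM.exists_rot_iterate_eq_lucasSquare
  obtain ⟨hu, hv, huv, hu2v, hv2u⟩ := (hrot ▸ hM.rot_iterate n).pos_and_ne_of_lucasSquare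
  rcases lt_or_gt_of_ne huv with hlt | hgt
  · refine ⟨reflect ∘ rot^[n], reflect_comp_rot_iterate_mem_Dih8 n, ?_⟩
    rw [Function.comp_apply, hrot, reflect_lucasSquare]
    exact exists_lucasSquare_eq_T1_add_or_T2_add z hu hlt hv2u
  · refine ⟨rot^[n], rot_iterate_mem_Dih8 n, ?_⟩
    rw [hrot]
    exact exists_lucasSquare_eq_T1_add_or_T2_add z hv hgt hu2v
end

section
/- The matrices of the form T₁ + i·A + j·B + k·C and T₂ + i'·A + j'·B + k'·D, where i, j, k, i', j', k' range over all nonnegative integers, are pairwise distinct; that is, T₁ + i·A + j·B + k·C = T₁ + i'·A + j'·B + k'·C implies (i,j,k) = (i',j',k'), T₂ + i·A + j·B + k·D = T₂ + i'·A + j'·B + k'·D implies (i,j,k) = (i',j',k'), and no matrix of the first form equals a matrix of the second form. -/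
open Matrix

/-!
Since `T₁ = B + C` and `T₂ = B + D`, the two families consist of combinations of `A, B, C` and of
`A, B, D` in which the last two coefficients are positive. The matrices `A, C, D` are linearly
independent and `B = C + D`, so `A, B, C` and `A, B, D` are linearly independent as well. Expanded
in `A, C, D`, the first family has its `C`-coefficient larger than its `D`-coefficient, the second
the other way round: the ray of `B` cuts the cone over `A, C, D` into two cones, and the families
lie in different halves.
-/

section LinearIndependent

variable {R M : Type*} [Semiring R] [AddCommMonoid M] [Module R M] {a b c d : M}

theorem linearIndependent_triple_iffₛ :
    LinearIndependent R ![a, b, c] ↔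
      ∀ r s t r' s' t' : R, r • a + s • b + t • c = r' • a + s' • b + t' • c →
        r = r' ∧ s = s' ∧ t = t' := by
  simp [Fintype.linearIndependent_iffₛ, Fin.sum_univ_three, Fin.forall_fin_succ_pi,
    Fin.forall_fin_zero_pi, Fin.forall_fin_succ]

theorem add_add_smul_add_smul_add_smul (r s t : R) :
    b + c + r • a + s • b + t • c = r • a + (s + 1) • b + (t + 1) • c := by
  simp only [add_smul, one_smul]
  abel

theorem smul_add_smul_add_add_smul_left (r s t : R) :
    r • a + s • (c + d) + t • c = r • a + (s + t) • c + s • d := by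
  simp only [smul_add, add_smul]
  abel

theorem smul_add_smul_add_add_smul_right (r s t : R) :
    r • a + s • (c + d) + t • d = r • a + s • c + (s + t) • d := by
  simp only [smul_add, add_smul]
  abel

theorem eq_and_eq_and_eq_of_add_add_smul_eq [IsRightCancelAdd R]
    (h : LinearIndependent R ![a, b, c]) {r s t r' s' t' : R}
    (heq : b + c + r • a + s • b + t • c = b + c + r' • a + s' • b + t' • c) :
    r = r' ∧ s = s' ∧ t = t' := by
  simp only [add_add_smul_add_smul_add_smul] at heq
  obtain ⟨hr, hs, ht⟩ := linearIndependent_triple_iffₛ.mp h _ _ _ _ _ _ heq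
  exact ⟨hr, add_right_cancel hs, add_right_cancel ht⟩

variable [IsLeftCancelAdd R]

theorem linearIndependent_triple_add_left (h : LinearIndependent R ![a, c, d]) :
    LinearIndependent R ![a, c + d, c] := by
  rw [linearIndependent_triple_iffₛ] at h ⊢
  intro r s t r' s' t' heq
  simp only [smul_add_smul_add_add_smul_left] at heq
  obtain ⟨hr, hst, rfl⟩ := h _ _ _ _ _ _ heq
  exact ⟨hr, rfl, add_left_cancel hst⟩

theorem linearIndependent_triple_add_right (h : LinearIndependent R ![a, c, d]) :
    LinearIndependent R ![a, c + d, d] := by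
  rw [linearIndependent_triple_iffₛ] at h ⊢
  intro r s t r' s' t' heq
  simp only [smul_add_smul_add_add_smul_right] at heq
  obtain ⟨hr, rfl, hst⟩ := h _ _ _ _ _ _ heq
  exact ⟨hr, rfl, add_left_cancel hst⟩

theorem smul_add_smul_add_add_smul_ne (h : LinearIndependent R ![a, c, d])
    {r s t r' s' t' : R} (ht : t + t' ≠ 0) :
    r • a + s • (c + d) + t • c ≠ r' • a + s' • (c + d) + t' • d := by
  intro heq
  rw [smul_add_smul_add_add_smul_left, smul_add_smul_add_add_smul_right] at heq
  obtain ⟨-, hc, hd⟩ := linearIndependent_triple_iffₛ.mp h _ _ _ _ _ _ heq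
  have hs : s + (t + t') = s := by rw [← add_assoc, hc, ← hd]
  exact ht (add_eq_left.mp hs)

end LinearIndependent

theorem B_eq_C_add_D : B = C + D := by decide

theorem T1_eq_B_add_C : T1 = B + C := by decide

theorem T2_eq_B_add_D : T2 = B + D := by decide

theorem linearIndependent_A_C_D : LinearIndependent ℕ ![A, C, D] := by
  rw [linearIndependent_triple_iffₛ]
  intro r s t r' s' t' h
  have h01 : r = r' := by simpa [A, C, D] using congr_fun₂ h 0 1
  have h10 : r + t * 2 = r' + t' * 2 := by simpa [A, C, D] using congr_fun₂ h 1 0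
  have h20 : r + s + t = r' + s' + t' := by simpa [A, C, D] using congr_fun₂ h 2 0
  lia

theorem linearIndependent_A_B_C : LinearIndependent ℕ ![A, B, C] :=
  B_eq_C_add_D ▸ linearIndependent_triple_add_left linearIndependent_A_C_D

theorem linearIndependent_A_B_D : LinearIndependent ℕ ![A, B, D] :=
  B_eq_C_add_D ▸ linearIndependent_triple_add_right linearIndependent_A_C_D

/-- The matrices `T₁ + i·A + j·B + k·C` and `T₂ + i'·A + j'·B + k'·D` are
pairwise distinct as `i, j, k, i', j', k'` range over the nonnegative integers. -/
theorem two_types_pairwise_distinct :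
    (∀ i j k i' j' k' : ℕ,
      T1 + i • A + j • B + k • C = T1 + i' • A + j' • B + k' • C →
        i = i' ∧ j = j' ∧ k = k') ∧
    (∀ i j k i' j' k' : ℕ,
      T2 + i • A + j • B + k • D = T2 + i' • A + j' • B + k' • D →
        i = i' ∧ j = j' ∧ k = k') ∧
    (∀ i j k i' j' k' : ℕ,
      T1 + i • A + j • B + k • C ≠ T2 + i' • A + j' • B + k' • D) := by
  rw [T1_eq_B_add_C, T2_eq_B_add_D]
  refine ⟨fun _ _ _ _ _ _ => eq_and_eq_and_eq_of_add_add_smul_eq linearIndependent_A_B_C,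
    fun _ _ _ _ _ _ => eq_and_eq_and_eq_of_add_add_smul_eq linearIndependent_A_B_D,
    fun i j k i' j' k' => ?_⟩
  rw [add_add_smul_add_smul_add_smul, add_add_smul_add_smul_add_smul, B_eq_C_add_D]
  have hk : k + 1 + (k' + 1) ≠ 0 := by lia
  exact smul_add_smul_add_add_smul_ne linearIndependent_A_C_D hk
end

section
/- If M = [[a₁,a₂,a₃],[b₁,b₂,b₃],[c₁,c₂,c₃]] is a reduced magic square of order 3, then a₂ = 0 and c₂ = 2·b₂. -/
open Matrix Finset

/-- A reduced magic square of order 3: a magic square one of whose entries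
is 0, and with `c₃ < a₁`, `c₃ < a₃`, `c₃ < c₁`, `c₁ < a₃`. -/
def IsReducedMagic (M : Matrix (Fin 3) (Fin 3) ℕ) : Prop :=
  IsMagicSquare M ∧ (∃ i j, M i j = 0) ∧
  M 2 2 < M 0 0 ∧ M 2 2 < M 0 2 ∧ M 2 2 < M 2 0 ∧ M 2 0 < M 0 2

/-!
Double counting the lines through the center gives `m = 3b₂`, so centrally opposite entries average
to `b₂`. From `c₃ ≤ a₁` and `c₁ ≤ a₃` the top corners are then at least `b₂`, and comparing lines
through a common corner shows that `a₂` is the smallest entry. As `0` occurs, `a₂ = 0`, and its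
opposite entry is `c₂ = 2b₂`.
-/

section MagicSum

variable {R : Type*} [AddCommMonoid R]

/-- The square matrix `M` has magic sum `m`: all its rows, all its columns and both diagonals sum
to `m`. This is a magic square without the requirement that the entries be distinct, over an
arbitrary additive commutative monoid. -/
structure HasMagicSum {n : ℕ} (M : Matrix (Fin n) (Fin n) R) (m : R) : Prop where
  row_sum (i : Fin n) : ∑ j, M i j = m
  col_sum (j : Fin n) : ∑ i, M i j = m
  diag_sum : ∑ i, M i i = m
  antidiag_sum : ∑ i, M i i.rev = m

theorem IsMagic.hasMagicSum {M : Matrix (Fin 3) (Fin 3) ℕ} {m : ℕ} (h : IsMagic M m) :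
    HasMagicSum M m :=
  ⟨h.2.1, h.2.2.1, h.2.2.2.1, h.2.2.2.2⟩

namespace HasMagicSum

variable {M : Matrix (Fin 3) (Fin 3) R} {m : R}

theorem row_sum_three (h : HasMagicSum M m) (i : Fin 3) : M i 0 + M i 1 + M i 2 = m := by
  simpa only [Fin.sum_univ_three] using h.row_sum i

theorem col_sum_three (h : HasMagicSum M m) (j : Fin 3) : M 0 j + M 1 j + M 2 j = m := by
  simpa only [Fin.sum_univ_three] using h.col_sum j

theorem diag_sum_three (h : HasMagicSum M m) : M 0 0 + M 1 1 + M 2 2 = m := by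
  simpa only [Fin.sum_univ_three] using h.diag_sum

theorem antidiag_sum_three (h : HasMagicSum M m) : M 0 2 + M 1 1 + M 2 0 = m := by
  simpa only [Fin.sum_univ_three, Fin.reduceRev] using h.antidiag_sum

section Cancel

variable [IsCancelAdd R]

theorem eq_three_nsmul_center (h : HasMagicSum M m) : m = 3 • M 1 1 := by
  -- The middle column and the diagonals cover the outer rows once and the center three times.
  have double_count : (m + m) + m = (m + m) + 3 • M 1 1 := calc
    (m + m) + m = (M 0 1 + M 1 1 + M 2 1) + (M 0 0 + M 1 1 + M 2 2)
        + (M 0 2 + M 1 1 + M 2 0) := by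
      rw [h.col_sum_three, h.diag_sum_three, h.antidiag_sum_three]
    _ = (M 0 0 + M 0 1 + M 0 2) + (M 2 0 + M 2 1 + M 2 2) + 3 • M 1 1 := by abel
    _ = (m + m) + 3 • M 1 1 := by rw [h.row_sum_three, h.row_sum_three]
  exact add_left_cancel double_count

theorem add_center_add_rev_rev (h : HasMagicSum M m) (i j : Fin 3) :
    M i j + M 1 1 + M i.rev j.rev = m := by
  have reverse (x y z : R) : x + y + z = z + y + x := by abel
  match i, j with
  | 0, 0 => exact h.diag_sum_three
  | 0, 1 => exact h.col_sum_three 1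
  | 0, 2 => exact h.antidiag_sum_three
  | 1, 0 => exact h.row_sum_three 1
  | 1, 1 => rw [h.eq_three_nsmul_center, succ_nsmul, two_nsmul]; rfl
  | 1, 2 => exact (reverse _ _ _).trans (h.row_sum_three 1)
  | 2, 0 => exact (reverse _ _ _).trans h.antidiag_sum_three
  | 2, 1 => exact (reverse _ _ _).trans (h.col_sum_three 1)
  | 2, 2 => exact (reverse _ _ _).trans h.diag_sum_three

theorem add_rev_rev_eq_two_nsmul_center (h : HasMagicSum M m) (i j : Fin 3) :
    M i j + M i.rev j.rev = 2 • M 1 1 := by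
  have line_sum : M i j + M i.rev j.rev + M 1 1 = 2 • M 1 1 + M 1 1 := calc
    M i j + M i.rev j.rev + M 1 1 = M i j + M 1 1 + M i.rev j.rev := add_right_comm _ _ _
    _ = m := h.add_center_add_rev_rev i j
    _ = 3 • M 1 1 := h.eq_three_nsmul_center
    _ = 2 • M 1 1 + M 1 1 := succ_nsmul _ 2
  exact add_right_cancel line_sum

end Cancel

section Order

variable [LinearOrder R] [IsOrderedCancelAddMonoid R]

theorem center_le_of_rev_rev_le (h : HasMagicSum M m) {i j : Fin 3}
    (hij : M i.rev j.rev ≤ M i j) : M 1 1 ≤ M i j := by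
  have two_center_le : 2 • M 1 1 ≤ 2 • M i j := calc
    2 • M 1 1 = M i j + M i.rev j.rev := (h.add_rev_rev_eq_two_nsmul_center i j).symm
    _ ≤ M i j + M i j := by gcongr
    _ = 2 • M i j := (two_nsmul _).symm
  exact le_of_nsmul_le_nsmul_right two_ne_zero two_center_le

theorem rev_rev_le_center_iff (h : HasMagicSum M m) {i j : Fin 3} :
    M i.rev j.rev ≤ M 1 1 ↔ M 1 1 ≤ M i j := by
  have opposite := h.add_rev_rev_eq_two_nsmul_center i j
  constructor <;> grind

theorem top_middle_le (h : HasMagicSum M m) (hdiag : M 2 2 ≤ M 0 0) (hanti : M 2 0 ≤ M 0 2)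
    (i j : Fin 3) : M 0 1 ≤ M i j := by
  have center_le_left : M 1 1 ≤ M 0 0 := h.center_le_of_rev_rev_le hdiag
  have center_le_right : M 1 1 ≤ M 0 2 := h.center_le_of_rev_rev_le hanti
  -- Each of the next four bounds compares two lines through a common corner.
  have le_bottom_left : M 0 1 ≤ M 2 0 := by
    have := (h.row_sum_three 0).trans h.antidiag_sum_three.symm
    grind only
  have le_bottom_right : M 0 1 ≤ M 2 2 := by
    have := (h.row_sum_three 0).trans h.diag_sum_three.symm
    grind only
  have le_middle_left : M 0 1 ≤ M 1 0 := by
    have := (h.row_sum_three 0).trans (h.col_sum_three 0).symm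
    grind only
  have le_middle_right : M 0 1 ≤ M 1 2 := by
    have := (h.row_sum_three 0).trans (h.col_sum_three 2).symm
    grind only
  have le_center : M 0 1 ≤ M 1 1 :=
    le_bottom_right.trans (h.rev_rev_le_center_iff.2 center_le_left)
  have center_le_bottom : M 1 1 ≤ M 2 1 := h.rev_rev_le_center_iff.1 le_center
  match i, j with
  | 0, 0 => exact le_center.trans center_le_left
  | 0, 1 => exact le_rfl
  | 0, 2 => exact le_center.trans center_le_right
  | 1, 0 => exact le_middle_left
  | 1, 1 => exact le_center
  | 1, 2 => exact le_middle_right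
  | 2, 0 => exact le_bottom_left
  | 2, 1 => exact le_center.trans center_le_bottom
  | 2, 2 => exact le_bottom_right

end Order

end HasMagicSum

theorem reduced_top_middle_zero_general [LinearOrder R] [IsOrderedCancelAddMonoid R]
    {M : Matrix (Fin 3) (Fin 3) R} {m : R} (h : HasMagicSum M m) (nonneg : ∀ i j, 0 ≤ M i j)
    (exists_zero : ∃ i j, M i j = 0) (hdiag : M 2 2 ≤ M 0 0) (hanti : M 2 0 ≤ M 0 2) :
    M 0 1 = 0 ∧ M 2 1 = 2 • M 1 1 := by
  obtain ⟨i, j, hij⟩ := exists_zero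
  have top_middle_eq_zero : M 0 1 = 0 :=
    le_antisymm (hij ▸ h.top_middle_le hdiag hanti i j) (nonneg 0 1)
  have opposite : M 0 1 + M 2 1 = 2 • M 1 1 := h.add_rev_rev_eq_two_nsmul_center 0 1
  exact ⟨top_middle_eq_zero, by rwa [top_middle_eq_zero, zero_add] at opposite⟩

end MagicSum

/-- In a reduced magic square, `a₂ = 0` and `c₂ = 2·b₂`. -/
theorem reduced_top_middle_zero (M : Matrix (Fin 3) (Fin 3) ℕ)
    (h : IsReducedMagic M) : M 0 1 = 0 ∧ M 2 1 = 2 * M 1 1 := by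
  obtain ⟨⟨m, hM⟩, exists_zero, hdiag, -, -, hanti⟩ := h
  exact reduced_top_middle_zero_general hM.hasMagicSum (fun _ _ ↦ Nat.zero_le _) exists_zero
    hdiag.le hanti.le
end

section
/- If M = [[a₁,a₂,a₃],[b₁,b₂,b₃],[c₁,c₂,c₃]] is a reduced magic square of order 3, then a₂ < b₁, a₂ < c₂, and a₂ < b₃. -/
open Matrix Finset

/-!
Two lines of equal sum compare their middle entries oppositely to the sums of their end entries. The
top row meets each of the left and right columns in a corner, which cancels, so that the comparison
becomes one between opposite corners; for the bottom row the two corner inequalities add up.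
-/

theorem lt_iff_lt_of_add_eq_add {α : Type*} [Add α] [LT α]
    [AddLeftStrictMono α] [AddLeftReflectLT α] [AddRightStrictMono α] [AddRightReflectLT α]
    {a b c d : α} (h : a + b = c + d) : a < c ↔ d < b := by
  rw [← add_lt_add_iff_right b, h, add_lt_add_iff_left]

section OrderedCancelMonoid

variable {α : Type*} [AddCommMonoid α] [PartialOrder α] [IsOrderedCancelAddMonoid α]

theorem middle_lt_middle_iff_of_sum_eq {f g : Fin 3 → α} (h : ∑ i, f i = ∑ i, g i) :
    f 1 < g 1 ↔ g 0 + g 2 < f 0 + f 2 := by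
  apply lt_iff_lt_of_add_eq_add
  simpa only [Fin.sum_univ_three, add_comm, add_left_comm, add_assoc] using h

theorem reduced_a2_small_general (M : Matrix (Fin 3) (Fin 3) α)
    (left : ∑ j, M 0 j = ∑ i, M i 0) (bottom : ∑ j, M 0 j = ∑ j, M 2 j)
    (right : ∑ j, M 0 j = ∑ i, M i 2)
    (main_diag : M 2 2 < M 0 0) (anti_diag : M 2 0 < M 0 2) :
    M 0 1 < M 1 0 ∧ M 0 1 < M 2 1 ∧ M 0 1 < M 1 2 := by
  refine ⟨(middle_lt_middle_iff_of_sum_eq left).2 ?_,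
    (middle_lt_middle_iff_of_sum_eq bottom).2 ?_, (middle_lt_middle_iff_of_sum_eq right).2 ?_⟩
  · exact add_lt_add_right anti_diag (M 0 0)
  · calc
      M 2 0 + M 2 2 < M 0 2 + M 0 0 := add_lt_add anti_diag main_diag
      _ = M 0 0 + M 0 2 := add_comm _ _
  · calc
      M 0 2 + M 2 2 < M 0 2 + M 0 0 := add_lt_add_right main_diag (M 0 2)
      _ = M 0 0 + M 0 2 := add_comm _ _

end OrderedCancelMonoid

/-- In a reduced magic square, `a₂ < b₁`, `a₂ < c₂` and `a₂ < b₃`. -/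
theorem reduced_a2_small (M : Matrix (Fin 3) (Fin 3) ℕ)
    (h : IsReducedMagic M) :
    M 0 1 < M 1 0 ∧ M 0 1 < M 2 1 ∧ M 0 1 < M 1 2 := by
  obtain ⟨⟨_, _, row, col, _, _⟩, _, main_diag, _, _, anti_diag⟩ := h
  exact reduced_a2_small_general M ((row 0).trans (col 0).symm) ((row 0).trans (row 2).symm)
    ((row 0).trans (col 2).symm) main_diag anti_diag
end

section
/- If M = [[a₁,a₂,a₃],[b₁,b₂,b₃],[c₁,c₂,c₃]] is a reduced magic square of order 3, then c₃ ≥ 1; that is, the corner entry c₃ is not 0. -/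
open Matrix Finset

/-!
The center `b₂` of a magic square is the mean of the opposite corners `a₃` and `c₁`, so `c₁ < a₃`
forces `b₂ < a₃`. The top row and the main diagonal share `a₁`, hence `a₂ + a₃ = b₂ + c₃`, and
therefore `a₂ < c₃`; in particular `c₃` is positive when the entries are nonnegative.
-/

/-- The rows, columns and both diagonals of the square array `M` all sum to `m`. Unlike `IsMagic`,
this asks neither for distinct entries nor for natural numbers, so it covers magic squares in the
weak sense over any commutative additive monoid. -/
structure HasMagicConstant {R : Type*} [AddCommMonoid R] {n : ℕ}
    (M : Matrix (Fin n) (Fin n) R) (m : R) : Prop where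
  row_sum : ∀ i, ∑ j, M i j = m
  col_sum : ∀ j, ∑ i, M i j = m
  diag_sum : ∑ i, M i i = m
  antidiag_sum : ∑ i, M i i.rev = m

lemma IsMagic.hasMagicConstant {M : Matrix (Fin 3) (Fin 3) ℕ} {m : ℕ} (hM : IsMagic M m) :
    HasMagicConstant M m :=
  let ⟨_, hrow, hcol, hdiag, hantidiag⟩ := hM
  ⟨hrow, hcol, hdiag, hantidiag⟩

namespace HasMagicConstant

lemma antidiag_sum_three {R : Type*} [AddCommMonoid R] {M : Matrix (Fin 3) (Fin 3) R} {m : R}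
    (hM : HasMagicConstant M m) : M 0 2 + M 1 1 + M 2 0 = m := by
  simpa only [Fin.sum_univ_three, Fin.reduceRev] using hM.antidiag_sum

section Cancel

variable {R : Type*} [AddCommMonoid R] [IsCancelAdd R] {M : Matrix (Fin 3) (Fin 3) R} {m : R}

lemma three_nsmul_center (hM : HasMagicConstant M m) : 3 • M 1 1 = m := by
  have hrow : M 1 0 + M 1 1 + M 1 2 = m := by
    simpa only [Fin.sum_univ_three] using hM.row_sum 1
  have hleft : M 0 0 + M 1 0 + M 2 0 = m := by
    simpa only [Fin.sum_univ_three] using hM.col_sum 0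
  have hright : M 0 2 + M 1 2 + M 2 2 = m := by
    simpa only [Fin.sum_univ_three] using hM.col_sum 2
  have hdiag : M 0 0 + M 1 1 + M 2 2 = m := by
    simpa only [Fin.sum_univ_three] using hM.diag_sum
  -- The middle row and the diagonals cover the outer columns once and the center three times.
  apply add_left_cancel (a := m + m)
  calc
    m + m + 3 • M 1 1
      = (M 0 0 + M 1 0 + M 2 0) + (M 0 2 + M 1 2 + M 2 2) + 3 • M 1 1 := by rw [hleft, hright]
    _ = (M 1 0 + M 1 1 + M 1 2) + (M 0 0 + M 1 1 + M 2 2) + (M 0 2 + M 1 1 + M 2 0) := by abel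
    _ = m + m + m := by rw [hrow, hdiag, hM.antidiag_sum_three]

lemma antidiag_corners_add (hM : HasMagicConstant M m) : M 0 2 + M 2 0 = 2 • M 1 1 := by
  apply add_right_cancel (b := M 1 1)
  rw [← succ_nsmul, hM.three_nsmul_center, add_right_comm, hM.antidiag_sum_three]

lemma top_edge_add_corner (hM : HasMagicConstant M m) : M 0 1 + M 0 2 = M 1 1 + M 2 2 := by
  have hrow := hM.row_sum 0
  have hdiag := hM.diag_sum
  rw [Fin.sum_univ_three, add_assoc] at hrow hdiag
  exact add_left_cancel (hrow.trans hdiag.symm)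

end Cancel

variable {R : Type*} [AddCommMonoid R] [LinearOrder R] [IsOrderedCancelAddMonoid R]
  {M : Matrix (Fin 3) (Fin 3) R} {m : R}

lemma center_lt_corner (hM : HasMagicConstant M m) (hlt : M 2 0 < M 0 2) : M 1 1 < M 0 2 := by
  have htwo : 2 • M 1 1 < 2 • M 0 2 := calc
    2 • M 1 1 = M 0 2 + M 2 0 := hM.antidiag_corners_add.symm
    _ < M 0 2 + M 0 2 := by gcongr
    _ = 2 • M 0 2 := (two_nsmul _).symm
  exact lt_of_nsmul_lt_nsmul_right 2 htwo

end HasMagicConstant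

theorem reduced_c3_pos_general {R : Type*} [AddCommMonoid R] [LinearOrder R]
    [IsOrderedCancelAddMonoid R] {M : Matrix (Fin 3) (Fin 3) R} {m : R}
    (hM : HasMagicConstant M m) (hlt : M 2 0 < M 0 2) : M 0 1 < M 2 2 := by
  refine lt_of_add_lt_add_left (a := M 1 1) ?_
  calc
    M 1 1 + M 0 1 < M 0 2 + M 0 1 := by gcongr; exact hM.center_lt_corner hlt
    _ = M 0 1 + M 0 2 := add_comm _ _
    _ = M 1 1 + M 2 2 := hM.top_edge_add_corner

/-- In a reduced magic square, the corner entry `c₃` is not `0`. -/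
theorem reduced_c3_pos (M : Matrix (Fin 3) (Fin 3) ℕ)
    (h : IsReducedMagic M) : 1 ≤ M 2 2 := by
  obtain ⟨⟨m, hM⟩, -, -, -, -, hlt⟩ := h
  exact Nat.one_le_of_lt (reduced_c3_pos_general hM.hasMagicConstant hlt)
end

section
/- For all nonnegative integers i, j, k, the matrix T₁ + i·A + j·B + k·C, which equals [[7+i+5j+2k, i, 5+i+4j+k],[2+i+2j, 4+i+3j+k, 6+i+4j+2k],[3+i+2j+k, 8+i+6j+2k, 1+i+j]], is a magic square of order 3 (in particular its nine entries are pairwise distinct). -/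
open Matrix Finset

/-!
The matrices `A`, `B` and `C` have constant line sums, so adding multiples of them to `T1` preserves
the sum conditions. Their entries also never decrease when the cells are listed in increasing order
of the entries of `T1`, so these additions keep the entries in strictly increasing order, hence
distinct.
-/

/-- The sum conditions of a magic square of arbitrary order, without distinctness of the entries:
every row, every column and both diagonals of `M` sum to `m`. Unlike `IsMagic`, this is preserved by
sums and scalar multiples. -/
structure HasLineSum {n : ℕ} {α : Type*} [AddCommMonoid α] (M : Matrix (Fin n) (Fin n) α) (m : α) :
    Prop where
  row (i : Fin n) : ∑ j, M i j = m
  col (j : Fin n) : ∑ i, M i j = m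
  diag : ∑ i, M i i = m
  antidiag : ∑ i, M i i.rev = m

namespace HasLineSum

variable {n : ℕ} {α : Type*} [AddCommMonoid α] {M N : Matrix (Fin n) (Fin n) α} {m s : α}

theorem add (hM : HasLineSum M m) (hN : HasLineSum N s) : HasLineSum (M + N) (m + s) where
  row i := by simp only [Matrix.add_apply, sum_add_distrib, hM.row, hN.row]
  col j := by simp only [Matrix.add_apply, sum_add_distrib, hM.col, hN.col]
  diag := by simp only [Matrix.add_apply, sum_add_distrib, hM.diag, hN.diag]
  antidiag := by simp only [Matrix.add_apply, sum_add_distrib, hM.antidiag, hN.antidiag]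

theorem smul {R : Type*} [DistribSMul R α] (hM : HasLineSum M m) (c : R) :
    HasLineSum (c • M) (c • m) where
  row i := by simp only [Matrix.smul_apply, ← smul_sum, hM.row]
  col j := by simp only [Matrix.smul_apply, ← smul_sum, hM.col]
  diag := by simp only [Matrix.smul_apply, ← smul_sum, hM.diag]
  antidiag := by simp only [Matrix.smul_apply, ← smul_sum, hM.antidiag]

end HasLineSum

theorem isMagic_iff_injective_and_hasLineSum {M : Matrix (Fin 3) (Fin 3) ℕ} {m : ℕ} :
    IsMagic M m ↔ Function.Injective (Function.uncurry M) ∧ HasLineSum M m :=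
  and_congr_right fun _ =>
    ⟨fun ⟨hrow, hcol, hdiag, hantidiag⟩ => ⟨hrow, hcol, hdiag, hantidiag⟩,
      fun h => ⟨h.row, h.col, h.diag, h.antidiag⟩⟩

theorem injective_add_of_monovary {ι α : Type*} [Add α] [LinearOrder α] [AddLeftMono α]
    [AddRightStrictMono α] {f g : ι → α} (hf : Function.Injective f) (hgf : Monovary g f) :
    Function.Injective (f + g) := by
  intro a b hab
  by_contra hne
  rcases (hf.ne hne).lt_or_gt with hlt | hgt
  · exact (add_lt_add_of_lt_of_le hlt (hgf hlt)).ne hab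
  · exact (add_lt_add_of_lt_of_le hgt (hgf hgt)).ne' hab

theorem IsMagic.add_of_monovary {M N : Matrix (Fin 3) (Fin 3) ℕ} {m s : ℕ} (hM : IsMagic M m)
    (hN : HasLineSum N s) (hNM : Monovary (Function.uncurry N) (Function.uncurry M)) :
    IsMagic (M + N) (m + s) := by
  rw [isMagic_iff_injective_and_hasLineSum] at hM ⊢
  exact ⟨injective_add_of_monovary hM.1 hNM, hM.2.add hN⟩

theorem hasLineSum_A : HasLineSum A 3 := by constructor <;> decide

theorem hasLineSum_B : HasLineSum B 9 := by constructor <;> decide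

theorem hasLineSum_C : HasLineSum C 3 := by constructor <;> decide

theorem isMagic_T1 : IsMagic T1 12 := by unfold IsMagic; decide

theorem monovary_A_T1 : Monovary (Function.uncurry A) (Function.uncurry T1) := by
  unfold Monovary; decide

theorem monovary_B_T1 : Monovary (Function.uncurry B) (Function.uncurry T1) := by
  unfold Monovary; decide

theorem monovary_C_T1 : Monovary (Function.uncurry C) (Function.uncurry T1) := by
  unfold Monovary; decide

theorem monovary_smul_add_smul_add_smul_T1 (i j k : ℕ) :
    Monovary (Function.uncurry (i • A + j • B + k • C)) (Function.uncurry T1) := fun _ _ hlt =>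
  add_le_add
    (add_le_add (nsmul_le_nsmul_right (monovary_A_T1 hlt) i)
      (nsmul_le_nsmul_right (monovary_B_T1 hlt) j))
    (nsmul_le_nsmul_right (monovary_C_T1 hlt) k)

theorem isMagic_T1_add_smul_add_smul_add_smul (i j k : ℕ) :
    IsMagic (T1 + i • A + j • B + k • C) (12 + (i • 3 + j • 9 + k • 3)) := by
  have hsum : HasLineSum (i • A + j • B + k • C) (i • 3 + j • 9 + k • 3) :=
    ((hasLineSum_A.smul i).add (hasLineSum_B.smul j)).add (hasLineSum_C.smul k)
  have hmagic := isMagic_T1.add_of_monovary hsum (monovary_smul_add_smul_add_smul_T1 i j k)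
  rwa [← add_assoc, ← add_assoc] at hmagic

/-- For all nonnegative integers `i, j, k`, the matrix `T₁ + i·A + j·B + k·C`
equals the displayed matrix and is a magic square of order 3. -/
theorem type_one_is_magic (i j k : ℕ) :
    T1 + i • A + j • B + k • C =
      !![7+i+5*j+2*k, i, 5+i+4*j+k;
         2+i+2*j, 4+i+3*j+k, 6+i+4*j+2*k;
         3+i+2*j+k, 8+i+6*j+2*k, 1+i+j] ∧
    IsMagicSquare (T1 + i • A + j • B + k • C) := by
  refine ⟨?_, _, isMagic_T1_add_smul_add_smul_add_smul i j k⟩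
  ext a b
  fin_cases a <;> fin_cases b <;> simp [T1, A, B, C] <;> ring
end

section
/- Every magic square of order 3 with magic number 12 is obtained from T₁ = [[7,0,5],[2,4,6],[3,8,1]] by applying a transformation in the dihedral group of order 8 (generated by rotation by 90 degrees and reflection, acting on the entries of a 3×3 matrix); in particular, there are exactly 8 magic squares of order 3 with magic number 12. -/
open Matrix Finset

/-!
A magic square is determined by its centre `e` and its top corners `e + u`, `e + v`: opposite
entries add up to `2 * e`, and `3 * e` is the magic number. The symmetries of the square act on
`(u, v)` by sign changes and by exchanging the two coordinates, and distinctness forces `u` and `v`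
to be nonzero and `|u| ≠ |v|`, so up to symmetry `0 < v < u`. For `e = 4` the top middle entry
`4 - u - v` is nonnegative only for `(u, v) = (2, 1)`, which repeats the entry `5`, and `(3, 1)`,
which is `T1`. Since the entries are distinct, the eight images of a magic square are distinct as
well.
-/

section PermuteEntries

variable {m n α : Type*}

/-- The matrix whose entry at position `p` is the entry of `M` at position `σ p`. This is a right
action: permuting by `τ` and then by `σ` amounts to permuting by `τ ∘ σ`. -/
def permuteEntries (σ : m × n → m × n) (M : Matrix m n α) : Matrix m n α :=
  Matrix.of fun i j => M (σ (i, j)).1 (σ (i, j)).2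

theorem permuteEntries_left_injective {M : Matrix m n α}
    (hM : Function.Injective fun p : m × n => M p.1 p.2) :
    Function.Injective fun σ => permuteEntries σ M := by
  intro σ τ h
  funext p
  exact hM (congrFun (congrFun h p.1) p.2)

end PermuteEntries

/-- The map of positions underlying `rot`. -/
def rotIndex (p : Fin 3 × Fin 3) : Fin 3 × Fin 3 := (p.2.rev, p.1)

/-- The map of positions underlying `reflect`. -/
def reflectIndex (p : Fin 3 × Fin 3) : Fin 3 × Fin 3 := (p.1, p.2.rev)

/-- The eight symmetries of the square of positions: `(n, false)` stands for the map underlying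
`rot^[n]`, and `(n, true)` for the one underlying `rot^[n] ∘ reflect`, whose factors compose in the
opposite order on positions. -/
def dihedralIndex (k : Fin 4 × Bool) : Fin 3 × Fin 3 → Fin 3 × Fin 3 :=
  (if k.2 then reflectIndex else id) ∘ rotIndex^[k.1]

theorem dihedralIndex_injective : Function.Injective dihedralIndex := by
  decide +kernel

theorem rot_iterate_eq_permuteEntries (n : ℕ) : rot^[n] = permuteEntries rotIndex^[n] := by
  induction n with
  | zero => rfl
  | succ n ih =>
    rw [Function.iterate_succ, ih, Function.iterate_succ']
    rfl

theorem rot_iterate_four (M : Matrix (Fin 3) (Fin 3) ℕ) : rot^[4] M = M := by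
  ext i j
  simp [rot]

theorem reflect_reflect (M : Matrix (Fin 3) (Fin 3) ℕ) : reflect (reflect M) = M := by
  ext i j
  simp [reflect]

theorem Dih8_eq_range : Dih8 = Set.range fun k => permuteEntries (dihedralIndex k) := by
  ext g
  constructor
  · rintro ⟨n, hn, rfl | rfl⟩
    · exact ⟨(⟨n, by omega⟩, false), (rot_iterate_eq_permuteEntries n).symm⟩
    · refine ⟨(⟨n, by omega⟩, true), ?_⟩
      rw [rot_iterate_eq_permuteEntries]
      rfl
  · rintro ⟨⟨n, b⟩, rfl⟩
    refine ⟨n, by omega, ?_⟩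
    rw [rot_iterate_eq_permuteEntries]
    cases b
    · exact Or.inl rfl
    · exact Or.inr rfl

theorem ncard_image_Dih8 {M : Matrix (Fin 3) (Fin 3) ℕ}
    (hM : Function.Injective fun p : Fin 3 × Fin 3 => M p.1 p.2) :
    ((fun g => g M) '' Dih8).ncard = 8 := by
  have hinj : Function.Injective fun k => permuteEntries (dihedralIndex k) M :=
    (permuteEntries_left_injective hM).comp dihedralIndex_injective
  rw [Dih8_eq_range, ← Set.range_comp]
  exact (Set.ncard_range_of_injective hinj).trans (by simp)

/-- A square whose top corners both exceed the centre, the left one by more. Every orbit of magic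
squares under `Dih8` has such a representative. -/
def IsNormalized (M : Matrix (Fin 3) (Fin 3) ℕ) : Prop :=
  M 1 1 < M 0 2 ∧ M 0 2 < M 0 0

namespace IsMagic

variable {M : Matrix (Fin 3) (Fin 3) ℕ} {m : ℕ}

theorem map_rot (h : IsMagic M m) : IsMagic (rot M) m := by
  obtain ⟨hinj, hrow, hcol, hdiag, hanti⟩ := h
  have hindex : Function.Injective rotIndex := by decide
  refine ⟨hinj.comp hindex, fun i => ?_, fun j => hrow j.rev, ?_, ?_⟩
  · exact (Equiv.sum_comp Fin.revPerm fun j => M j i).trans (hcol i)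
  · rw [← hanti, ← Equiv.sum_comp Fin.revPerm]
    simp [rot]
  · simpa [rot] using hdiag

theorem map_reflect (h : IsMagic M m) : IsMagic (reflect M) m := by
  obtain ⟨hinj, hrow, hcol, hdiag, hanti⟩ := h
  have hindex : Function.Injective reflectIndex := by decide
  refine ⟨hinj.comp hindex, fun i => ?_, fun j => hcol j.rev, hanti, ?_⟩
  · exact (Equiv.sum_comp Fin.revPerm (M i)).trans (hrow i)
  · simpa [reflect] using hdiag

theorem map_rot_iterate (h : IsMagic M m) (n : ℕ) : IsMagic (rot^[n] M) m :=
  Function.Iterate.rec (IsMagic · m) h (fun _ => map_rot) n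

theorem map_of_mem_Dih8 (h : IsMagic M m) {g} (hg : g ∈ Dih8) : IsMagic (g M) m := by
  obtain ⟨n, -, rfl | rfl⟩ := hg
  · exact h.map_rot_iterate n
  · exact h.map_reflect.map_rot_iterate n

theorem ne_of_ne (h : IsMagic M m) {i j k l : Fin 3} (hne : (i, j) ≠ (k, l)) : M i j ≠ M k l :=
  h.1.ne hne

theorem three_mul_center (h : IsMagic M m) : 3 * M 1 1 = m := by
  obtain ⟨-, hrow, hcol, hdiag, hanti⟩ := h
  -- The column and the diagonals through the centre cover the outer rows once, the centre thrice.
  have hcount : (∑ i, M i 1) + (∑ i, M i i) + (∑ i, M i i.rev) =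
      (∑ j, M 0 j) + (∑ j, M 2 j) + 3 * M 1 1 := by
    simp only [Fin.sum_univ_three, Fin.reduceRev]
    ring
  rw [hcol, hdiag, hanti, hrow, hrow] at hcount
  omega

theorem add_rev (h : IsMagic M m) (i j : Fin 3) : M i j + M i.rev j.rev = 2 * M 1 1 := by
  have hcenter := h.three_mul_center
  obtain ⟨-, hrow, hcol, hdiag, hanti⟩ := h
  have hrow₁ := hrow 1
  have hcol₁ := hcol 1
  simp only [Fin.sum_univ_three, Fin.reduceRev] at hrow₁ hcol₁ hdiag hanti
  fin_cases i <;> fin_cases j <;>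
    simp only [Fin.zero_eta, Fin.mk_one, Fin.reduceFinMk, Fin.reduceRev] <;> omega

theorem exists_center_lt_rot_iterate (h : IsMagic M m) :
    ∃ n ≤ 3, M 1 1 < (rot^[4 - n] M) 0 0 ∧ M 1 1 < (rot^[4 - n] M) 0 2 := by
  have hdiag : M 0 0 + M 2 2 = 2 * M 1 1 := h.add_rev 0 0
  have hanti : M 0 2 + M 2 0 = 2 * M 1 1 := h.add_rev 0 2
  have hne₀ : M 0 0 ≠ M 1 1 := h.ne_of_ne (by decide)
  have hne₂ : M 0 2 ≠ M 1 1 := h.ne_of_ne (by decide)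
  rcases hne₀.lt_or_gt with h₀ | h₀ <;> rcases hne₂.lt_or_gt with h₂ | h₂
  · exact ⟨2, by omega, show M 1 1 < M 2 2 by omega, show M 1 1 < M 2 0 by omega⟩
  · exact ⟨1, by omega, show M 1 1 < M 0 2 by omega, show M 1 1 < M 2 2 by omega⟩
  · exact ⟨3, by omega, show M 1 1 < M 2 0 by omega, show M 1 1 < M 0 0 by omega⟩
  · exact ⟨0, by omega, h₀, h₂⟩

theorem exists_isNormalized (h : IsMagic M m) :
    ∃ N, IsMagic N m ∧ IsNormalized N ∧ ∃ g ∈ Dih8, M = g N := by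
  obtain ⟨n, hn, h₀, h₂⟩ := h.exists_center_lt_rot_iterate
  set N := rot^[4 - n] M with hN
  have hM : M = rot^[n] N := by
    rw [hN, ← Function.iterate_add_apply, Nat.add_sub_of_le (by omega), rot_iterate_four]
  have hmagic : IsMagic N m := h.map_rot_iterate _
  have hcenter : N 1 1 = M 1 1 := by
    have := hmagic.three_mul_center
    have := h.three_mul_center
    omega
  rw [← hcenter] at h₀ h₂
  have hne : N 0 2 ≠ N 0 0 := hmagic.ne_of_ne (by decide)
  rcases hne.lt_or_gt with hlt | hgt
  · exact ⟨N, hmagic, ⟨h₂, hlt⟩, rot^[n], ⟨n, hn, Or.inl rfl⟩, hM⟩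
  · refine ⟨reflect N, hmagic.map_reflect, ⟨h₀, hgt⟩, rot^[n] ∘ reflect, ⟨n, hn, Or.inr rfl⟩, ?_⟩
    rw [Function.comp_apply, reflect_reflect, hM]

theorem eq_T1_of_isNormalized (h : IsMagic M 12) (hnorm : IsNormalized M) : M = T1 := by
  obtain ⟨hcenter_lt, hlt⟩ := hnorm
  have hcenter : M 1 1 = 4 := by
    have := h.three_mul_center
    omega
  have hantipode (i j : Fin 3) : M i j + M i.rev j.rev = 8 := by rw [h.add_rev, hcenter]
  have h₀₀ : M 0 0 + M 2 2 = 8 := hantipode 0 0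
  have h₀₁ : M 0 1 + M 2 1 = 8 := hantipode 0 1
  have h₀₂ : M 0 2 + M 2 0 = 8 := hantipode 0 2
  have h₁₀ : M 1 0 + M 1 2 = 8 := hantipode 1 0
  have hrow : M 0 0 + M 0 1 + M 0 2 = 12 := by simpa [Fin.sum_univ_three] using h.2.1 0
  have hcol : M 0 2 + M 1 2 + M 2 2 = 12 := by simpa [Fin.sum_univ_three] using h.2.2.1 2
  have hne : M 0 2 ≠ M 1 2 := h.ne_of_ne (by decide)
  have hright : M 0 2 = 5 := by omega
  have hleft : M 0 0 = 7 := by omega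
  rw [M.eta_fin_three, T1]
  congr! <;> omega

end IsMagic

theorem isMagic_twelve_iff {M : Matrix (Fin 3) (Fin 3) ℕ} :
    IsMagic M 12 ↔ ∃ g ∈ Dih8, M = g T1 := by
  constructor
  · intro h
    obtain ⟨N, hN, hnorm, g, hg, rfl⟩ := h.exists_isNormalized
    exact ⟨g, hg, congrArg g (hN.eq_T1_of_isNormalized hnorm)⟩
  · rintro ⟨g, hg, rfl⟩
    exact isMagic_T1.map_of_mem_Dih8 hg

/-- Every magic square of order 3 with magic number `12` is obtained from `T₁`
by a rotation or reflection; in particular there are exactly `8` of them. -/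
theorem magic_number_twelve :
    (∀ M : Matrix (Fin 3) (Fin 3) ℕ, IsMagic M 12 → ∃ g ∈ Dih8, M = g T1) ∧
    {M : Matrix (Fin 3) (Fin 3) ℕ | IsMagic M 12}.ncard = 8 := by
  refine ⟨fun M => isMagic_twelve_iff.mp, ?_⟩
  have horbit : {M | IsMagic M 12} = (fun g => g T1) '' Dih8 := by
    ext M
    simp only [Set.mem_ofPred_eq, isMagic_twelve_iff, Set.mem_image, eq_comm]
  rw [horbit]
  exact ncard_image_Dih8 isMagic_T1.1
end
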